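/- (Lemma 1, '△' identity.) Let W be a binary-input discrete memoryless channel with finite output alphabet 𝒴, let n = 2^m ≥ 4, and let 1 ≤ i ≤ n/2 − 1. Then for all y ∈ 𝒴ⁿ and all u₁,…,u_{2i+2} ∈ 𝔽₂: V_{2i+1}^{(n)}(y, (u₁,…,u_{2i}) | u_{2i+1}, u_{2i+2}) = (1/4)·V_i^{(n/2)}(y_odd, (ũ₁, ũ₃, …, ũ_{2i−3}) | u_{2i−1}+u_{2i}, u_{2i+1}+u_{2i+2}) · V_i^{(n/2)}(y_even, (ũ₂, ũ₄, …, ũ_{2i−2}) | u_{2i}, u_{2i+2}). This is the identity V_{2i+1}^{(n)} = (V_i^{(n/2)})^△. -/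

import Mathlib

/-!
Two facts give the identity.

* The conditioning event in `adjChannel` has probability `1/4`: summing over the outputs leaves the
  uniform law on messages (`prob_pair_eq`). Hence `V_i(y, v_{<i} | v_i, v_{i+1})` is four times the
  joint probability `prefixSum` that the output is `y` and the first `i + 2` message bits are those
  of `v` (`adjChannel_eq_prefixSum`).
* The bijection `u ↦ ũ = ((u_{2j} + u_{2j+1})_j, (u_{2j+1})_j)` satisfies: the even and odd
  coordinates (0-based) of `u (A ⊗ G₂)` are the two halves of `ũ` multiplied by `A`. It also sends a
  prefix constraint of length `2t` to prefix constraints of length `t` on both halves. So the joint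
  probability factors (`prefixSum_interKron`).

Therefore `V^{(n)} = 4 · (V'/4) · (V''/4) = (1/4) · V' · V''`.
-/


open scoped Classical

/-- Probability of an event `E` under a pmf `P` on a finite space. -/
noncomputable def prob {Ω : Type*} [Fintype Ω] (P : Ω → ℝ) (E : Ω → Prop) : ℝ :=
  ∑ ω : Ω, if E ω then P ω else 0

/-- The polar-coding model `μ_G`: the joint pmf on message/output pairs, where the message
`u` is uniform on `𝔽₂ⁿ`, the codeword is `uG`, and each coordinate is sent through the
binary-input channel `W` (here `W x y` denotes the transition probability `W(y|x)`). -/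
noncomputable def polarPMF {𝒴 : Type*} [Fintype 𝒴] {n : ℕ}
    (W : ZMod 2 → 𝒴 → ℝ) (G : Matrix (Fin n) (Fin n) (ZMod 2)) :
    (Fin n → ZMod 2) × (Fin n → 𝒴) → ℝ :=
  fun p => (1 / 2 : ℝ) ^ n * ∏ j, W (Matrix.vecMul p.1 G j) (p.2 j)

/-- The adjacent-bits-channel `V_i^M` of the model `μ_M` (0-based index `i`):
`V_i^M(y, (u_0, …, u_{i-1}) | a, b) = P(Y = y, U_0 = u_0, …, U_{i-1} = u_{i-1} | U_i = a, U_{i+1} = b)`.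
Only the values `upre j` for `j < i` are relevant. -/
noncomputable def adjChannel {𝒴 : Type*} [Fintype 𝒴] {m : ℕ}
    (W : ZMod 2 → 𝒴 → ℝ) (M : Matrix (Fin m) (Fin m) (ZMod 2))
    (i : ℕ) (y : Fin m → 𝒴) (upre : ℕ → ZMod 2) (a b : ZMod 2) : ℝ :=
  prob (polarPMF W M)
      (fun p => p.2 = y ∧ ∀ j : Fin m,
        (j.val < i → p.1 j = upre j.val) ∧ (j.val = i → p.1 j = a) ∧
          (j.val = i + 1 → p.1 j = b)) /
    prob (polarPMF W M)
      (fun p => ∀ j : Fin m, (j.val = i → p.1 j = a) ∧ (j.val = i + 1 → p.1 j = b))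

/-- The 2×2 Arıkan kernel `G₂ = [[1,0],[1,1]]` over `𝔽₂`. -/
def G2 : Matrix (Fin 2) (Fin 2) (ZMod 2) := !![1, 0; 1, 1]

/-- The Kronecker product `A ⊗ G₂` under the interleaved index identification
`(j, k) ↦ 2j + k` (0-based): `(A ⊗ G₂)(r, c) = A(r/2, c/2) · G₂(r%2, c%2)`. -/
def interKron {m : ℕ} (A : Matrix (Fin m) (Fin m) (ZMod 2)) :
    Matrix (Fin (2 * m)) (Fin (2 * m)) (ZMod 2) :=
  fun r c =>
    A ⟨r.val / 2, by have := r.isLt; omega⟩ ⟨c.val / 2, by have := c.isLt; omega⟩ *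
      G2 ⟨r.val % 2, by omega⟩ ⟨c.val % 2, by omega⟩

/-- The polar matrix `G_{2^m}^polar = G₂^{⊗ m}` (via `G_{2n} = G_n ⊗ G₂`,
interleaved identification). -/
def Gpolar : (m : ℕ) → Matrix (Fin (2 ^ m)) (Fin (2 ^ m)) (ZMod 2)
  | 0 => 1
  | m + 1 => Matrix.reindex (finCongr (by ring)) (finCongr (by ring)) (interKron (Gpolar m))

/-- The joint probability that the output is `y` and the first `t` message bits are
`v 0, …, v (t - 1)`, in the model `polarPMF W M`. -/
noncomputable def prefixSum {𝒴 : Type*} {m : ℕ}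
    (W : ZMod 2 → 𝒴 → ℝ) (M : Matrix (Fin m) (Fin m) (ZMod 2))
    (t : ℕ) (y : Fin m → 𝒴) (v : ℕ → ZMod 2) : ℝ :=
  ∑ u : Fin m → ZMod 2, if ∀ j : Fin m, j.val < t → u j = v j.val then
    (1 / 2 : ℝ) ^ m * ∏ j, W (Matrix.vecMul u M j) (y j) else 0

lemma sum_prod_channel {𝒴 : Type*} [Fintype 𝒴] {m : ℕ}
    (W : ZMod 2 → 𝒴 → ℝ) (hW1 : ∀ x, ∑ y, W x y = 1) (x : Fin m → ZMod 2) :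
    ∑ y : Fin m → 𝒴, ∏ j, W (x j) (y j) = 1 := by
  have h := Finset.prod_univ_sum (fun _ : Fin m => (Finset.univ : Finset 𝒴))
    (fun j y => W (x j) y)
  rw [Fintype.piFinset_univ] at h
  rw [← h]
  simp [hW1]

/-- The conditioning event `U_i = a, U_{i+1} = b` has probability `1/4`. -/
lemma prob_pair_eq {𝒴 : Type*} [Fintype 𝒴] {m : ℕ}
    (W : ZMod 2 → 𝒴 → ℝ) (hW1 : ∀ x, ∑ y, W x y = 1)
    (M : Matrix (Fin m) (Fin m) (ZMod 2)) (i : ℕ) (hi : i + 1 < m) (a b : ZMod 2) :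
    prob (polarPMF W M)
      (fun p => ∀ j : Fin m, (j.val = i → p.1 j = a) ∧ (j.val = i + 1 → p.1 j = b)) = 1 / 4 := by
  unfold prob polarPMF
  rw [Fintype.sum_prod_type]
  -- The indicator of the event, times `2^{-m}`, is a product over the coordinates of the message.
  have h1 : ∀ u : Fin m → ZMod 2,
      (∑ y : Fin m → 𝒴,
        if ∀ j : Fin m, (j.val = i → u j = a) ∧ (j.val = i + 1 → u j = b) then
          (1 / 2 : ℝ) ^ m * ∏ j, W (Matrix.vecMul u M j) (y j) else 0) =
      ∏ j : Fin m,
        if (j.val = i → u j = a) ∧ (j.val = i + 1 → u j = b) then (1 / 2 : ℝ) else 0 := by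
    intro u
    by_cases h : ∀ j : Fin m, (j.val = i → u j = a) ∧ (j.val = i + 1 → u j = b)
    · simp only [if_pos h]
      rw [← Finset.mul_sum, sum_prod_channel W hW1, Finset.prod_congr rfl (fun j _ => if_pos (h j))]
      simp
    · simp only [if_neg h]
      push Not at h
      obtain ⟨j, hj⟩ := h
      rw [Finset.sum_const_zero, eq_comm]
      refine Finset.prod_eq_zero (Finset.mem_univ j) (if_neg ?_)
      tauto
  refine (Finset.sum_congr rfl fun u _ =>
    (Finset.sum_congr rfl fun z _ => by congr).trans (h1 u)).trans ?_
  have h := Finset.prod_univ_sum (fun _ : Fin m => (Finset.univ : Finset (ZMod 2)))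
    (fun j x => if (j.val = i → x = a) ∧ (j.val = i + 1 → x = b) then (1 / 2 : ℝ) else 0)
  rw [Fintype.piFinset_univ] at h
  rw [← h]
  have h2 : ∀ j : Fin m, (∑ x : ZMod 2,
      if (j.val = i → x = a) ∧ (j.val = i + 1 → x = b) then (1 / 2 : ℝ) else 0) =
      (if j = ⟨i, by omega⟩ then (1 / 2 : ℝ) else 1) *
        (if j = ⟨i + 1, hi⟩ then (1 / 2 : ℝ) else 1) := by
    intro j
    by_cases hj : j.val = i
    · simp [Fin.ext_iff, hj]
    · by_cases hj' : j.val = i + 1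
      · simp [Fin.ext_iff, hj']
      · simp [Fin.ext_iff, hj, hj', ZMod.card]
  rw [Finset.prod_congr rfl fun j _ => h2 j, Finset.prod_mul_distrib,
    Finset.prod_ite_eq', Finset.prod_ite_eq']
  norm_num

lemma adjChannel_eq_prefixSum {𝒴 : Type*} [Fintype 𝒴] {m : ℕ}
    (W : ZMod 2 → 𝒴 → ℝ) (hW1 : ∀ x, ∑ y, W x y = 1)
    (M : Matrix (Fin m) (Fin m) (ZMod 2)) (i : ℕ) (hi : i + 1 < m)
    (y : Fin m → 𝒴) (v : ℕ → ZMod 2) :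
    adjChannel W M i y v (v i) (v (i + 1)) = 4 * prefixSum W M (i + 2) y v := by
  unfold adjChannel
  rw [prob_pair_eq W hW1 M i hi]
  have : prob (polarPMF W M)
      (fun p => p.2 = y ∧ ∀ j : Fin m,
        (j.val < i → p.1 j = v j.val) ∧ (j.val = i → p.1 j = v i) ∧
          (j.val = i + 1 → p.1 j = v (i + 1))) = prefixSum W M (i + 2) y v := by
    unfold prob prefixSum polarPMF
    rw [Fintype.sum_prod_type]
    refine Finset.sum_congr rfl fun u _ => ?_
    rw [Finset.sum_eq_single y]
    · congr 1
      simp only [true_and, eq_iff_iff]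
      refine forall_congr' fun j => ⟨fun ⟨h1, h2, h3⟩ hj => ?_, fun h => ⟨fun hj => h (by omega),
        fun hj => hj ▸ h (by omega), fun hj => hj ▸ h (by omega)⟩⟩
      obtain hj | hj | hj : j.val < i ∨ j.val = i ∨ j.val = i + 1 := by omega
      · exact h1 hj
      · rw [h2 hj, hj]
      · rw [h3 hj, hj]
    · intro z _ hz
      exact if_neg fun h => hz h.1
    · simp
  rw [this]
  ring

/-- The index `2j` of the first member of the `j`-th pair. -/
def evenIdx {m : ℕ} (j : Fin m) : Fin (2 * m) := ⟨2 * j.val, by omega⟩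

/-- The index `2j + 1` of the second member of the `j`-th pair. -/
def oddIdx {m : ℕ} (j : Fin m) : Fin (2 * m) := ⟨2 * j.val + 1, by omega⟩

/-- The identification `(j, k) ↦ 2j + k`. -/
def pairEquiv (m : ℕ) : Fin m × Fin 2 ≃ Fin (2 * m) :=
  finProdFinEquiv.trans (finCongr (Nat.mul_comm m 2))

lemma pairEquiv_zero {m : ℕ} (j : Fin m) : pairEquiv m (j, 0) = evenIdx j := by
  ext; simp [pairEquiv, evenIdx]

lemma pairEquiv_one {m : ℕ} (j : Fin m) : pairEquiv m (j, 1) = oddIdx j := by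
  ext; simp [pairEquiv, oddIdx, add_comm]

lemma prod_pairs {m : ℕ} (f : Fin (2 * m) → ℝ) :
    ∏ r, f r = (∏ j : Fin m, f (evenIdx j)) * ∏ j : Fin m, f (oddIdx j) := by
  rw [← (pairEquiv m).prod_comp, Fintype.prod_prod_type, ← Finset.prod_mul_distrib]
  simp [Fin.prod_univ_two, pairEquiv_zero, pairEquiv_one]

lemma sum_pairs {m : ℕ} (f : Fin (2 * m) → ZMod 2) :
    ∑ r, f r = ∑ j : Fin m, (f (evenIdx j) + f (oddIdx j)) := by
  rw [← (pairEquiv m).sum_comp, Fintype.sum_prod_type]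
  simp [Fin.sum_univ_two, pairEquiv_zero, pairEquiv_one]

lemma forall_pairs {m : ℕ} {p : Fin (2 * m) → Prop} :
    (∀ r, p r) ↔ ∀ j : Fin m, p (evenIdx j) ∧ p (oddIdx j) := by
  rw [← (pairEquiv m).forall_congr_right, Prod.forall]
  simp [Fin.forall_fin_two, pairEquiv_zero, pairEquiv_one]

/-- The transformation `u ↦ ũ`, split into the sums `u_{2j} + u_{2j+1}` and the second members
`u_{2j+1}`. -/
def tildeEquiv (m : ℕ) : (Fin (2 * m) → ZMod 2) ≃ (Fin m → ZMod 2) × (Fin m → ZMod 2) where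
  toFun u := (fun j => u (evenIdx j) + u (oddIdx j), fun j => u (oddIdx j))
  invFun p r := if r.val % 2 = 0 then p.1 ⟨r.val / 2, by omega⟩ + p.2 ⟨r.val / 2, by omega⟩
    else p.2 ⟨r.val / 2, by omega⟩
  left_inv u := by
    rw [funext_iff, forall_pairs]
    intro j
    have h : (2 * j.val + 1) / 2 = j.val := by omega
    simp [evenIdx, oddIdx, h, add_assoc, CharTwo.add_self_eq_zero]
  right_inv p := by
    have h : ∀ j : Fin m, (2 * j.val + 1) / 2 = j.val := by intro j; omega
    ext j <;> simp [evenIdx, oddIdx, h, add_assoc, CharTwo.add_self_eq_zero]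

lemma vecMul_interKron_even {m : ℕ} (A : Matrix (Fin m) (Fin m) (ZMod 2))
    (u : Fin (2 * m) → ZMod 2) (l : Fin m) :
    Matrix.vecMul u (interKron A) (evenIdx l) = Matrix.vecMul (tildeEquiv m u).1 A l := by
  simp only [Matrix.vecMul, dotProduct]
  rw [sum_pairs]
  refine Finset.sum_congr rfl fun j _ => ?_
  have h : (2 * j.val + 1) / 2 = j.val := by omega
  simp [interKron, evenIdx, oddIdx, G2, tildeEquiv, h, Nat.add_mod]
  ring

lemma vecMul_interKron_odd {m : ℕ} (A : Matrix (Fin m) (Fin m) (ZMod 2))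
    (u : Fin (2 * m) → ZMod 2) (l : Fin m) :
    Matrix.vecMul u (interKron A) (oddIdx l) = Matrix.vecMul (tildeEquiv m u).2 A l := by
  simp only [Matrix.vecMul, dotProduct]
  rw [sum_pairs]
  refine Finset.sum_congr rfl fun j _ => ?_
  have h : ∀ j : Fin m, (2 * j.val + 1) / 2 = j.val := by intro j; omega
  simp [interKron, evenIdx, oddIdx, G2, tildeEquiv, h, Nat.add_mod]

/-- A prefix constraint of length `2t` on `u` amounts to constraints of length `t` on both halves
of `ũ`. -/
lemma prefix_iff {m : ℕ} (t : ℕ) (u : Fin (2 * m) → ZMod 2) (v : ℕ → ZMod 2) :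
    (∀ r : Fin (2 * m), r.val < 2 * t → u r = v r.val) ↔
      (∀ j : Fin m, j.val < t → (tildeEquiv m u).1 j = v (2 * j.val) + v (2 * j.val + 1)) ∧
        ∀ j : Fin m, j.val < t → (tildeEquiv m u).2 j = v (2 * j.val + 1) := by
  rw [forall_pairs, ← forall_and]
  refine forall_congr' fun j => ?_
  have h1 : 2 * j.val < 2 * t ↔ j.val < t := by omega
  have h2 : 2 * j.val + 1 < 2 * t ↔ j.val < t := by omega
  simp only [tildeEquiv, Equiv.coe_fn_mk]
  change (2 * j.val < 2 * t → u (evenIdx j) = v (2 * j.val)) ∧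
    (2 * j.val + 1 < 2 * t → u (oddIdx j) = v (2 * j.val + 1)) ↔ _
  rw [h1, h2]
  constructor
  · rintro ⟨ha, hb⟩
    exact ⟨fun h => by rw [ha h, hb h], hb⟩
  · rintro ⟨ha, hb⟩
    exact ⟨fun h => by have := ha h; rw [hb h] at this; exact add_right_cancel this, hb⟩

lemma prefixSum_interKron {𝒴 : Type*} {m : ℕ}
    (W : ZMod 2 → 𝒴 → ℝ) (A : Matrix (Fin m) (Fin m) (ZMod 2))
    (t : ℕ) (y : Fin (2 * m) → 𝒴) (v : ℕ → ZMod 2) :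
    prefixSum W (interKron A) (2 * t) y v =
      prefixSum W A t (fun j => y (evenIdx j)) (fun s => v (2 * s) + v (2 * s + 1)) *
        prefixSum W A t (fun j => y (oddIdx j)) (fun s => v (2 * s + 1)) := by
  unfold prefixSum
  rw [Finset.sum_mul_sum, ← Fintype.sum_prod_type', ← (tildeEquiv m).sum_comp]
  refine Finset.sum_congr rfl fun u _ => ?_
  rw [if_congr (prefix_iff t u v) rfl rfl, prod_pairs]
  simp only [vecMul_interKron_even, vecMul_interKron_odd]
  rw [ite_and]
  split_ifs
  · ring
  · simp
  · simp
  · simp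

/-- `prefixSum_interKron` along an equality of sizes, as needed for the reindexing in `Gpolar`. -/
lemma prefixSum_reindex {𝒴 : Type*} {m n : ℕ} (h : 2 * m = n)
    (W : ZMod 2 → 𝒴 → ℝ) (A : Matrix (Fin m) (Fin m) (ZMod 2))
    (t : ℕ) (y : Fin n → 𝒴) (v : ℕ → ZMod 2) :
    prefixSum W (Matrix.reindex (finCongr h) (finCongr h) (interKron A)) (2 * t) y v =
      prefixSum W A t (fun j => y ⟨2 * j.val, by omega⟩) (fun s => v (2 * s) + v (2 * s + 1)) *
        prefixSum W A t (fun j => y ⟨2 * j.val + 1, by omega⟩) (fun s => v (2 * s + 1)) := by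
  subst h
  exact prefixSum_interKron W A t y v

/-- Lemma 1, '△' identity: `V_{2i+1}^{(n)} = (V_i^{(n/2)})^△` (paper's 1-based index `i`,
`n = 2^(k+2) ≥ 4`, `1 ≤ i ≤ n/2 − 1`; the channels below use 0-based indices). -/
theorem adjChannel_polar_triangle {𝒴 : Type*} [Fintype 𝒴]
    (W : ZMod 2 → 𝒴 → ℝ) (hW0 : ∀ x y, 0 ≤ W x y) (hW1 : ∀ x, ∑ y, W x y = 1)
    (k i : ℕ) (hi1 : 1 ≤ i) (hi2 : i ≤ 2 ^ (k + 1) - 1)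
    (y : Fin (2 ^ (k + 2)) → 𝒴) (u : ℕ → ZMod 2) :
    adjChannel W (Gpolar (k + 2)) (2 * i) y u (u (2 * i)) (u (2 * i + 1)) =
      (1 / 4 : ℝ) *
        adjChannel W (Gpolar (k + 1)) (i - 1)
            (fun j => y ⟨2 * j.val, by
              have := j.isLt
              have h : (2 : ℕ) ^ (k + 2) = 2 * 2 ^ (k + 1) := (by ring); omega⟩)
            (fun t => u (2 * t) + u (2 * t + 1))
            (u (2 * i - 2) + u (2 * i - 1)) (u (2 * i) + u (2 * i + 1)) *
          adjChannel W (Gpolar (k + 1)) (i - 1)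
            (fun j => y ⟨2 * j.val + 1, by
              have := j.isLt
              have h : (2 : ℕ) ^ (k + 2) = 2 * 2 ^ (k + 1) := (by ring); omega⟩)
            (fun t => u (2 * t + 1)) (u (2 * i - 1)) (u (2 * i + 1)) := by
  have hpow : (2 : ℕ) ^ (k + 2) = 2 * 2 ^ (k + 1) := by ring
  -- The two `adjChannel` factors on the right start at the 0-based index `i - 1 = d`.
  obtain ⟨d, rfl⟩ : ∃ d, i = d + 1 := ⟨i - 1, by omega⟩
  have hL := adjChannel_eq_prefixSum W hW1 (Gpolar (k + 2)) (2 * (d + 1)) (by omega) y u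
  have hA := adjChannel_eq_prefixSum W hW1 (Gpolar (k + 1)) d (by omega)
    (fun j => y ⟨2 * j.val, by omega⟩) (fun t => u (2 * t) + u (2 * t + 1))
  have hB := adjChannel_eq_prefixSum W hW1 (Gpolar (k + 1)) d (by omega)
    (fun j => y ⟨2 * j.val + 1, by omega⟩) (fun t => u (2 * t + 1))
  have hS : prefixSum W (Gpolar (k + 2)) (2 * (d + 2)) y u = _ :=
    prefixSum_reindex hpow.symm W (Gpolar (k + 1)) (d + 2) y u
  have e1 : 2 * (d + 1) - 2 = 2 * d := by omega
  have e2 : 2 * (d + 1) - 1 = 2 * d + 1 := by omega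
  have e3 : 2 * (d + 1) + 2 = 2 * (d + 2) := by omega
  rw [e1, e2, Nat.add_sub_cancel, hL, e3, hS]
  rw [hA, hB]
  ring
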